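/- arXiv:2105.13873 — 2 statements merged into one kernel-verified Lean document; each statement's English description precedes it below -/
import Mathlib

section
/- For any pair of linearly independent vectors Y1, Y2 ∈ V1 there exists a bijection Ψ: ℝ^5 → ℝ^5 such that Ψ(x·y) = Ψ(x)·Ψ(y) for all x,y ∈ ℝ^5, Ψ(δ_λ(x)) = δ_λ(Ψ(x)) for all x ∈ ℝ^5 and λ > 0, and Ψ(exp(X1)) = exp(Y1), Ψ(exp(X2)) = exp(Y2). -/
open MeasureTheory Set Filter
open scoped ENNReal NNReal Topology

noncomputable section

/-- The free Carnot group `𝔽_{2,3}` identified with `ℝ⁵` via exponential coordinates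
of the second type. -/
abbrev G : Type := Fin 5 → ℝ

/-- The group product of `𝔽_{2,3}` in exponential coordinates of the second type. -/
def gmul (x y : G) : G :=
  ![x 0 + y 0, x 1 + y 1, x 2 + y 2 - x 0 * y 1,
    x 3 + y 3 - x 0 * y 2 + x 0 ^ 2 * y 1 / 2,
    x 4 + y 4 + x 0 * x 1 * y 1 + x 0 * y 1 ^ 2 / 2 - x 1 * y 2]

/-- The group inverse of `𝔽_{2,3}`. -/
def ginv (x : G) : G :=
  ![-x 0, -x 1, -x 2 - x 0 * x 1,
    -x 3 - x 0 * x 2 - x 0 ^ 2 * x 1 / 2,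
    -x 4 - x 1 * x 2 - x 0 * x 1 ^ 2 / 2]

/-- The dilations `δ_l` (the formula is used also for `l < 0`). -/
def gdil (l : ℝ) (x : G) : G :=
  ![l * x 0, l * x 1, l ^ 2 * x 2, l ^ 3 * x 3, l ^ 3 * x 4]

/-- A horizontal vector `(v₁, v₂) ∈ V₁` as a point of `ℝ⁵`. -/
def hor (v : ℝ × ℝ) : G := ![v.1, v.2, 0, 0, 0]

/-- Exponential of a horizontal vector in exponential coordinates of the second type. -/
def gexp (v : ℝ × ℝ) : G :=
  ![v.1, v.2, -(v.1 * v.2) / 2, v.1 ^ 2 * v.2 / 6, v.1 * v.2 ^ 2 / 3]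

/-- The homogeneous norm with parameters `e2, e3`. -/
def gnorm (e2 e3 : ℝ) (x : G) : ℝ :=
  max (Real.sqrt (x 0 ^ 2 + x 1 ^ 2))
    (max (e2 * |x 2| ^ ((1 : ℝ) / 2))
      (e3 * Real.sqrt (x 3 ^ 2 + x 4 ^ 2) ^ ((1 : ℝ) / 3)))

/-- The left-invariant homogeneous distance induced by `gnorm`. -/
def gdist (e2 e3 : ℝ) (x y : G) : ℝ := gnorm e2 e3 (gmul (ginv x) y)

/-- The predicate saying that `gdist e2 e3` is a distance on `ℝ⁵`. -/
def IsDist (e2 e3 : ℝ) : Prop :=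
  (∀ x y : G, gdist e2 e3 x y = gdist e2 e3 y x) ∧
    (∀ x y : G, gdist e2 e3 x y = 0 ↔ x = y) ∧
      ∀ x y z : G, gdist e2 e3 x z ≤ gdist e2 e3 x y + gdist e2 e3 y z

/-- Diameter of a set with respect to `gdist`, valued in `ℝ≥0∞`. -/
def gdiam (e2 e3 : ℝ) (S : Set G) : ℝ≥0∞ :=
  ⨆ x ∈ S, ⨆ y ∈ S, ENNReal.ofReal (gdist e2 e3 x y)

/-- The 1-dimensional Hausdorff measure of the metric space `(ℝ⁵, gdist e2 e3)`. -/
def H1 (e2 e3 : ℝ) (A : Set G) : ℝ≥0∞ :=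
  ⨆ (δ : ℝ) (_ : 0 < δ),
    ⨅ (E : ℕ → Set G) (_ : A ⊆ ⋃ n, E n)
      (_ : ∀ n, gdiam e2 e3 (E n) ≤ ENNReal.ofReal δ),
        ∑' n, 2⁻¹ * gdiam e2 e3 (E n)

/-- `γ` is `L`-Lipschitz w.r.t. `gdist` on a set `B ⊆ ℝ`. -/
def LipOn (e2 e3 L : ℝ) (γ : ℝ → G) (B : Set ℝ) : Prop :=
  ∀ s ∈ B, ∀ t ∈ B, gdist e2 e3 (γ s) (γ t) ≤ L * |s - t|

/-- The Pansu derivative of `γ : B → ℝ⁵` at `t` is `v`, i.e.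
`v = lim_{s → 0, t+s ∈ B} δ_{1/s}(γ(t)⁻¹ ⬝ γ(t+s))`. -/
def HasPansuDeriv (B : Set ℝ) (γ : ℝ → G) (t : ℝ) (v : G) : Prop :=
  Tendsto (fun s : ℝ => gdil s⁻¹ (gmul (ginv (γ t)) (γ (t + s))))
    (𝓝[{s : ℝ | s ≠ 0 ∧ t + s ∈ B}] 0) (𝓝 v)

/-- Membership in the one-sided open Euclidean cone `C(e, σ) ⊆ V₁`:
`⟨v, e⟩ > (1 - σ²)|v|`. -/
def inCone (e : ℝ × ℝ) (σ : ℝ) (v : ℝ × ℝ) : Prop :=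
  (1 - σ ^ 2) * Real.sqrt (v.1 ^ 2 + v.2 ^ 2) < e.1 * v.1 + e.2 * v.2

/-- `η` is a full `C(e, σ)`-curve on the compact interval `[a, b]`: it is Lipschitz
w.r.t. `gdist` and its Pansu derivative exists, is horizontal, and lies in `C(e, σ)`
at a.e. point. -/
def IsFullCCurve (e2 e3 : ℝ) (e : ℝ × ℝ) (σ a b : ℝ) (η : ℝ → G) : Prop :=
  a ≤ b ∧ (∃ L : ℝ, LipOn e2 e3 L η (Icc a b)) ∧
    ∀ᵐ t ∂(volume.restrict (Icc a b)), ∃ v : ℝ × ℝ,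
      HasPansuDeriv (Icc a b) η t (hor v) ∧ inCone e σ v

/-- The horizontal one-parameter subgroup `𝔑(e) = {exp (t e) : t ∈ ℝ}`. -/
def Nsub (e : ℝ × ℝ) : Set G := {x | ∃ t : ℝ, x = gexp (t * e.1, t * e.2)}

/-- The complementary normal homogeneous subgroup `𝕍(e) = {x : e₁x₁ + e₂x₂ = 0}`. -/
def Vsub (e : ℝ × ℝ) : Set G := {x | e.1 * x 0 + e.2 * x 1 = 0}

/-- Distance from a point to a set, `dist(x, S) = inf_{y ∈ S} d(x, y)`. -/
def distSet (e2 e3 : ℝ) (x : G) (S : Set G) : ℝ := sInf (gdist e2 e3 x '' S)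

/-- Left coset `p ⬝ S`. -/
def coset (p : G) (S : Set G) : Set G := gmul p '' S

/-- The intrinsic graph of `φ` over `B`, `{a ⬝ φ(a) : a ∈ B}`. -/
def graphOf (B : Set G) (φ : G → G) : Set G := (fun a => gmul a (φ a)) '' B

/-- `φ : B → 𝕍(e)` is intrinsic Lipschitz with constant `σ`:
`dist(q, p ⬝ 𝔑(e)) ≤ σ ‖p⁻¹ ⬝ q‖` for all `p, q` in the graph of `φ`. -/
def IntrinsicLipWith (e2 e3 : ℝ) (e : ℝ × ℝ) (σ : ℝ) (B : Set G) (φ : G → G) : Prop :=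
  ∀ p ∈ graphOf B φ, ∀ q ∈ graphOf B φ,
    distSet e2 e3 q (coset p (Nsub e)) ≤ σ * gnorm e2 e3 (gmul (ginv p) q)

/-- `φ : B → 𝕍(e)` is intrinsic Lipschitz (for some constant `σ ∈ [0, 1)`). -/
def IntrinsicLip (e2 e3 : ℝ) (e : ℝ × ℝ) (B : Set G) (φ : G → G) : Prop :=
  ∃ σ : ℝ, 0 ≤ σ ∧ σ < 1 ∧ IntrinsicLipWith e2 e3 e σ B φ

/-- The sub-semigroup `X(e, σ)` generated by exponentials of horizontal vectors in the
cone `C(e, σ)`. -/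
def Xset (e : ℝ × ℝ) (σ : ℝ) : Set G :=
  {x | ∃ (N : ℕ) (w : Fin N → ℝ × ℝ), (∀ i, inCone e σ (w i)) ∧
    x = (List.ofFn fun i => gexp (w i)).foldr gmul 0}

/-- The left-invariant horizontal vector field `X₁` in coordinates. -/
def X1v (_ : G) : G := ![1, 0, 0, 0, 0]

/-- The left-invariant horizontal vector field `X₂` in coordinates. -/
def X2v (x : G) : G := ![0, 1, -x 0, x 0 ^ 2 / 2, x 0 * x 1]

/-- A sub-unit horizontal curve on `[0, T]`. -/
def IsSubunit (T : ℝ) (γ : ℝ → G) : Prop :=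
  (∃ C : ℝ≥0, LipschitzOnWith C γ (Icc 0 T)) ∧
    ∃ h : ℝ → ℝ × ℝ, ∀ᵐ t ∂(volume.restrict (Icc 0 T)),
      HasDerivWithinAt γ ((h t).1 • X1v (γ t) + (h t).2 • X2v (γ t)) (Icc 0 T) t ∧
        (h t).1 ^ 2 + (h t).2 ^ 2 ≤ 1

/-- The Carnot–Carathéodory distance on `𝔽_{2,3}`. -/
def dc (x y : G) : ℝ :=
  sInf {T : ℝ | 0 ≤ T ∧ ∃ γ : ℝ → G, γ 0 = x ∧ γ T = y ∧ IsSubunit T γ}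

/-!
Every element of `𝔽_{2,3}` is uniquely a product `n · exp v` with `v` horizontal and `n` in the
derived subgroup. In these coordinates the group law is built from vector operations and the area
form on the horizontal plane only. A linear map `L` of that plane multiplies the area form by
`det L`, so acting by `L`, `det L` and `det L • L` on the three layers is a group endomorphism.
This construction is functorial in `L`: an inverse of `L` yields an inverse endomorphism, and since
the dilations are the endomorphisms induced by scalars, they commute with all the others.
-/

/-- The standard area form on the horizontal layer `ℝ × ℝ`, through which horizontal vectors
enter the brackets of the free Lie algebra. -/
def areaForm (v w : ℝ × ℝ) : ℝ := v.1 * w.2 - v.2 * w.1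

theorem areaForm_eq_basis_det (v w : ℝ × ℝ) :
    areaForm v w = (Module.Basis.finTwoProd ℝ).det ![v, w] := by
  simp only [areaForm, Module.Basis.det_apply, Matrix.det_fin_two, Module.Basis.toMatrix_apply,
    Matrix.cons_val_zero, Matrix.cons_val_one, Module.Basis.coe_finTwoProd_repr]
  ring

theorem areaForm_map (L : Module.End ℝ (ℝ × ℝ)) (v w : ℝ × ℝ) :
    areaForm (L v) (L w) = LinearMap.det L * areaForm v w := by
  have map_pair : ![L v, L w] = L ∘ ![v, w] := by
    funext i
    fin_cases i <;> rfl
  rw [areaForm_eq_basis_det, areaForm_eq_basis_det, map_pair, Module.Basis.det_comp]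

theorem exists_linearMap_eq_and_det_eq_areaForm (u v : ℝ × ℝ) :
    ∃ L : Module.End ℝ (ℝ × ℝ), L (1, 0) = u ∧ L (0, 1) = v ∧
      LinearMap.det L = areaForm u v := by
  let L : Module.End ℝ (ℝ × ℝ) :=
    (LinearMap.toSpanSingleton ℝ _ u).coprod (LinearMap.toSpanSingleton ℝ _ v)
  have map_fst : L (1, 0) = u := by simp [L]
  have map_snd : L (0, 1) = v := by simp [L]
  refine ⟨L, map_fst, map_snd, ?_⟩
  have area_image := areaForm_map L (1, 0) (0, 1)
  rw [map_fst, map_snd] at area_image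
  simpa [areaForm] using area_image.symm

/-- The parametrization of `𝔽_{2,3}` by its three layers: `(v, s, w)` stands for the element
`(0, 0, s, w₁, w₂)` of the derived subgroup times `exp v`. -/
def layerEquiv : (ℝ × ℝ) × ℝ × (ℝ × ℝ) ≃ G where
  toFun p := gmul ![0, 0, p.2.1, p.2.2.1, p.2.2.2] (gexp p.1)
  invFun x := ((x 0, x 1), x 2 + x 0 * x 1 / 2,
    (x 3 - x 0 ^ 2 * x 1 / 6, x 4 - x 0 * x 1 ^ 2 / 3))
  left_inv p := by
    ext <;> simp [gmul, gexp]
    ring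
  right_inv x := by
    funext i
    fin_cases i <;> simp [gmul, gexp]
    ring

theorem gexp_eq_layerEquiv (v : ℝ × ℝ) : gexp v = layerEquiv (v, 0, 0) := by
  funext i
  fin_cases i <;> simp [layerEquiv, gmul, gexp]

theorem gdil_layerEquiv (l : ℝ) (v : ℝ × ℝ) (s : ℝ) (w : ℝ × ℝ) :
    gdil l (layerEquiv (v, s, w)) = layerEquiv (l • v, l ^ 2 * s, l ^ 3 • w) := by
  funext i
  fin_cases i <;> simp [layerEquiv, gdil, gmul, gexp] <;> ring

/-- The polynomial terms are those of the Baker–Campbell–Hausdorff formula, with the Lie bracket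
of horizontal vectors being `-areaForm` in the second layer. -/
theorem gmul_layerEquiv (v v' : ℝ × ℝ) (s s' : ℝ) (w w' : ℝ × ℝ) :
    gmul (layerEquiv (v, s, w)) (layerEquiv (v', s', w')) =
      layerEquiv (v + v', s + s' - areaForm v v' / 2,
        w + w' - s' • v + areaForm v v' • ((1 / 3 : ℝ) • v + (1 / 6 : ℝ) • v')) := by
  funext i
  fin_cases i <;> simp [layerEquiv, areaForm, gmul, gexp] <;> ring

/-- The homogeneous endomorphism of `𝔽_{2,3}` induced by a linear endomorphism `L` of the
horizontal layer. The second layer is `⋀² V₁` and the third is `⋀² V₁ ⊗ V₁`, so `L` acts on them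
by `det L` and `det L • L`. -/
def inducedEnd (L : Module.End ℝ (ℝ × ℝ)) (x : G) : G :=
  layerEquiv (Prod.map L (Prod.map (LinearMap.det L • ·) (LinearMap.det L • L ·))
    (layerEquiv.symm x))

theorem inducedEnd_layerEquiv (L : Module.End ℝ (ℝ × ℝ)) (v : ℝ × ℝ) (s : ℝ) (w : ℝ × ℝ) :
    inducedEnd L (layerEquiv (v, s, w)) =
      layerEquiv (L v, LinearMap.det L * s, LinearMap.det L • L w) := by
  simp only [inducedEnd, Equiv.symm_apply_apply, Prod.map_apply, smul_eq_mul]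

theorem inducedEnd_gexp (L : Module.End ℝ (ℝ × ℝ)) (v : ℝ × ℝ) :
    inducedEnd L (gexp v) = gexp (L v) := by
  simp only [gexp_eq_layerEquiv, inducedEnd_layerEquiv, mul_zero, map_zero, smul_zero]

theorem inducedEnd_gmul (L : Module.End ℝ (ℝ × ℝ)) (x y : G) :
    inducedEnd L (gmul x y) = gmul (inducedEnd L x) (inducedEnd L y) := by
  obtain ⟨⟨v, s, w⟩, rfl⟩ := layerEquiv.surjective x
  obtain ⟨⟨v', s', w'⟩, rfl⟩ := layerEquiv.surjective y
  simp only [gmul_layerEquiv, inducedEnd_layerEquiv, areaForm_map, map_add, map_sub, map_smul]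
  congr 3
  · ring
  · module

theorem inducedEnd_one : inducedEnd 1 = id := by
  funext x
  obtain ⟨⟨v, s, w⟩, rfl⟩ := layerEquiv.surjective x
  simp only [inducedEnd_layerEquiv, map_one, one_mul, one_smul, Module.End.one_apply, id_eq]

theorem inducedEnd_mul (L M : Module.End ℝ (ℝ × ℝ)) :
    inducedEnd (L * M) = inducedEnd L ∘ inducedEnd M := by
  funext x
  obtain ⟨⟨v, s, w⟩, rfl⟩ := layerEquiv.surjective x
  simp only [Function.comp_apply, inducedEnd_layerEquiv, map_mul, Module.End.mul_apply, map_smul,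
    mul_assoc, mul_smul]

theorem gdil_eq_inducedEnd_smul_one (l : ℝ) : gdil l = inducedEnd (l • 1) := by
  have det_smul_one : LinearMap.det (l • (1 : Module.End ℝ (ℝ × ℝ))) = l ^ 2 := by
    simp [LinearMap.det_smul]
  funext x
  obtain ⟨⟨v, s, w⟩, rfl⟩ := layerEquiv.surjective x
  simp only [gdil_layerEquiv, inducedEnd_layerEquiv, det_smul_one, LinearMap.smul_apply,
    Module.End.one_apply, smul_smul, ← pow_succ]

theorem inducedEnd_gdil (L : Module.End ℝ (ℝ × ℝ)) (l : ℝ) (x : G) :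
    inducedEnd L (gdil l x) = gdil l (inducedEnd L x) := by
  have scalar_comm : L * (l • 1) = (l • 1) * L := by
    rw [mul_smul_one, smul_one_mul]
  simp only [gdil_eq_inducedEnd_smul_one, ← Function.comp_apply (f := inducedEnd _),
    ← inducedEnd_mul, scalar_comm]

theorem bijective_inducedEnd {L : Module.End ℝ (ℝ × ℝ)} (hL : LinearMap.det L ≠ 0) :
    Function.Bijective (inducedEnd L) := by
  obtain ⟨⟨L, M, mul_inv, inv_mul⟩, rfl⟩ := (LinearMap.isUnit_iff_isUnit_det L).mpr hL.isUnit
  refine Function.bijective_iff_has_inverse.mpr ⟨inducedEnd M, fun x => ?_, fun x => ?_⟩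
  · rw [← Function.comp_apply (f := inducedEnd M), ← inducedEnd_mul, inv_mul, inducedEnd_one, id]
  · rw [← Function.comp_apply (f := inducedEnd L), ← inducedEnd_mul, mul_inv, inducedEnd_one, id]

/-- For any linearly independent `Y₁, Y₂ ∈ V₁` there is a homogeneous
group automorphism `Ψ` of `𝔽_{2,3}` with `Ψ(exp X₁) = exp Y₁` and `Ψ(exp X₂) = exp Y₂`. -/
theorem statement8 (Y1 Y2 : ℝ × ℝ) (hind : Y1.1 * Y2.2 - Y1.2 * Y2.1 ≠ 0) :
    ∃ Ψ : G → G, Function.Bijective Ψ ∧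
      (∀ x y : G, Ψ (gmul x y) = gmul (Ψ x) (Ψ y)) ∧
      (∀ l : ℝ, 0 < l → ∀ x : G, Ψ (gdil l x) = gdil l (Ψ x)) ∧
      Ψ (gexp (1, 0)) = gexp Y1 ∧ Ψ (gexp (0, 1)) = gexp Y2 := by
  obtain ⟨L, map_fst, map_snd, det_eq⟩ := exists_linearMap_eq_and_det_eq_areaForm Y1 Y2
  have det_ne_zero : LinearMap.det L ≠ 0 := det_eq ▸ hind
  refine ⟨inducedEnd L, bijective_inducedEnd det_ne_zero, inducedEnd_gmul L,
    fun l _ => inducedEnd_gdil L l, ?_, ?_⟩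
  · rw [inducedEnd_gexp, map_fst]
  · rw [inducedEnd_gexp, map_snd]
end
end

section
/- Let B ⊆ ℝ be Borel, L > 0, and let γ: B → ℝ^5 satisfy d_c(γ(s),γ(t)) ≤ L|s−t| for all s,t ∈ B. Then for a.e. t ∈ B the derivative γ'(t) := lim_{r→0, t+r∈B} (γ(t+r)−γ(t))/r exists, and there exists a measurable h = (h1,h2): B → ℝ² with |h(t)| ≤ L for a.e. t ∈ B such that γ'(t) = h1(t)·X1(γ(t)) + h2(t)·X2(γ(t)) for a.e. t ∈ B. -/
open MeasureTheory Set Filter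
open scoped ENNReal NNReal Topology

noncomputable section

/-!
The projection of `γ` to the first layer is Lipschitz for the Euclidean norm, so it is
differentiable almost everywhere along `B`, with a derivative `h` of norm at most `L`. Freezing the
frame `X₁, X₂` at the starting point `x` of a horizontal curve of length `T` changes its velocity
by `O(T)`, so the endpoint `y` differs from `x + (y₁ - x₁) X₁(x) + (y₂ - x₂) X₂(x)` by `O(T²)`.
Hence, wherever the projection of `γ` is differentiable, so is `γ`, with derivative
`h₁ X₁(γ) + h₂ X₂(γ)`.

Since `sInf ∅ = 0`, bounding `dc` from below requires knowing that any two points are joined by a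
horizontal curve. The first layer is reached along one exponential; the other coordinates are then
corrected by lifting loops around rectangles, which move them by the area and the first moments of
the rectangle.
-/

section Calculus

variable {E : Type*} [NormedAddCommGroup E] [NormedSpace ℝ E]

theorem abs_sub_le_of_lipschitzOnWith_of_ae_abs_deriv_le {f f' : ℝ → ℝ} {C : ℝ≥0} {a b K : ℝ}
    (hab : a ≤ b) (hf : LipschitzOnWith C f (Icc a b))
    (hf' : ∀ᵐ t ∂volume.restrict (Icc a b),
      HasDerivWithinAt f (f' t) (Icc a b) t ∧ |f' t| ≤ K) :
    |f b - f a| ≤ K * (b - a) := by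
  have hac : AbsolutelyContinuousOnInterval f a b :=
    LipschitzOnWith.absolutelyContinuousOnInterval (by rwa [uIcc_of_le hab])
  have hderiv : ∀ᵐ t, t ∈ uIoc a b → ‖deriv f t‖ ≤ K := by
    filter_upwards [(ae_restrict_iff' measurableSet_Icc).1 hf', volume.ae_ne b] with t ht htb htab
    rw [uIoc_of_le hab] at htab
    obtain ⟨hd, hK⟩ := ht (Ioc_subset_Icc_self htab)
    rwa [(hd.hasDerivAt (Icc_mem_nhds htab.1 (htab.2.lt_of_ne htb))).deriv]
  rw [← hac.integral_deriv_eq_sub, ← abs_of_nonneg (sub_nonneg.2 hab)]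
  exact intervalIntegral.norm_integral_le_of_norm_le_const_ae hderiv

theorem norm_sub_le_of_lipschitzOnWith_of_ae_norm_deriv_le {f f' : ℝ → E} {C : ℝ≥0} {a b K : ℝ}
    (hab : a ≤ b) (hf : LipschitzOnWith C f (Icc a b))
    (hf' : ∀ᵐ t ∂volume.restrict (Icc a b),
      HasDerivWithinAt f (f' t) (Icc a b) t ∧ ‖f' t‖ ≤ K) :
    ‖f b - f a‖ ≤ K * (b - a) := by
  obtain ⟨ℓ, hℓ, hℓf⟩ := exists_dual_vector'' ℝ (f b - f a)
  have hscalar : |ℓ (f b) - ℓ (f a)| ≤ K * (b - a) := by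
    refine abs_sub_le_of_lipschitzOnWith_of_ae_abs_deriv_le (f := ℓ ∘ f) (f' := ℓ ∘ f') hab
      (ℓ.lipschitz.comp_lipschitzOnWith hf) ?_
    filter_upwards [hf'] with t ⟨hd, hK⟩
    exact ⟨ℓ.hasFDerivAt.comp_hasDerivWithinAt t hd, (ℓ.le_of_opNorm_le hℓ _).trans (by simpa)⟩
  rwa [← map_sub, hℓf, RCLike.ofReal_real_eq_id, id, abs_norm] at hscalar

theorem norm_le_of_hasDerivWithinAt_of_norm_sub_le {f : ℝ → E} {f' : E} {s : Set ℝ} {t L : ℝ}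
    (hf : HasDerivWithinAt f f' s t) (hs : (𝓝[s \ {t}] t).NeBot)
    (hL : ∀ r ∈ s, ‖f r - f t‖ ≤ L * |r - t|) : ‖f'‖ ≤ L := by
  refine le_of_tendsto (hasDerivWithinAt_iff_tendsto_slope.1 hf).norm ?_
  filter_upwards [self_mem_nhdsWithin] with r hr
  have hpos : 0 < |r - t| := abs_pos.2 (sub_ne_zero.2 hr.2)
  rw [slope_def_module, norm_smul, norm_inv, Real.norm_eq_abs, inv_mul_le_iff₀ hpos, mul_comm]
  exact hL r hr.1

theorem ae_nhdsWithin_diff_singleton_neBot (s : Set ℝ) :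
    ∀ᵐ t, t ∈ s → (𝓝[s \ {t}] t).NeBot := by
  filter_upwards [(countable_setOfPred_isolated_right_within (s := s)).ae_notMem volume]
    with t ht hts
  have hright : (𝓝[s ∩ Ioi t] t).NeBot := ⟨fun hbot => ht ⟨hts, hbot⟩⟩
  exact hright.mono (nhdsWithin_mono t fun r hr => ⟨hr.1, ne_of_gt hr.2⟩)

variable [FiniteDimensional ℝ E] [MeasurableSpace E] [BorelSpace E]

theorem exists_measurable_ae_hasDerivWithinAt_of_norm_sub_le {f : ℝ → E} {s : Set ℝ} {L : ℝ}
    (hf : ∀ r ∈ s, ∀ t ∈ s, ‖f r - f t‖ ≤ L * |r - t|) :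
    ∃ f' : ℝ → E, Measurable f' ∧
      ∀ᵐ t, t ∈ s → ‖f' t‖ ≤ L ∧ HasDerivWithinAt f (f' t) s t := by
  have hlip : LipschitzOnWith L.toNNReal f s := LipschitzOnWith.of_dist_le_mul fun r hr t ht => by
    rw [dist_eq_norm, Real.dist_eq]
    exact (hf r hr t ht).trans (by gcongr; exact Real.le_coe_toNNReal L)
  obtain ⟨g, hg, hfg⟩ := hlip.extend_finite_dimension
  refine ⟨deriv g, measurable_deriv g, ?_⟩
  filter_upwards [hg.ae_differentiableAt_real, ae_nhdsWithin_diff_singleton_neBot s]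
    with t hgt hst ht
  have hd : HasDerivWithinAt f (deriv g t) s t :=
    hgt.hasDerivAt.hasDerivWithinAt.congr hfg (hfg ht)
  exact ⟨norm_le_of_hasDerivWithinAt_of_norm_sub_le hd (hst ht) fun r hr => hf r hr t ht, hd⟩

end Calculus

section HorizontalBundle

/-- The projection of `𝔽_{2,3}` onto its first layer, given the Euclidean norm. -/
def horProj : G →L[ℝ] EuclideanSpace ℝ (Fin 2) :=
  (EuclideanSpace.equiv (Fin 2) ℝ).symm.toContinuousLinearMap ∘L
    ContinuousLinearMap.pi ![ContinuousLinearMap.proj 0, ContinuousLinearMap.proj 1]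

/-- The linear map sending `v` to the value `v₁ X₁(x) + v₂ X₂(x)` at `x` of the left-invariant
horizontal vector field with canonical coordinates `v`. -/
def horLift (x : G) : EuclideanSpace ℝ (Fin 2) →L[ℝ] G :=
  (EuclideanSpace.proj 0).smulRight (X1v x) + (EuclideanSpace.proj 1).smulRight (X2v x)

theorem horProj_apply (x : G) : horProj x = !₂[x 0, x 1] := by
  ext i
  fin_cases i <;> rfl

theorem horLift_apply (x : G) (v : EuclideanSpace ℝ (Fin 2)) :
    horLift x v = v 0 • X1v x + v 1 • X2v x := rfl

theorem horProj_horLift (x : G) (v : EuclideanSpace ℝ (Fin 2)) : horProj (horLift x v) = v := by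
  ext i
  fin_cases i <;> simp [horProj_apply, horLift_apply, X1v, X2v]

theorem continuous_X2v : Continuous X2v := by
  unfold X2v
  fun_prop

theorem continuous_horLift_apply {v : ℝ → EuclideanSpace ℝ (Fin 2)} {γ : ℝ → G}
    (hγ : Continuous γ) (hv : Continuous v) : Continuous fun t => horLift (γ t) (v t) := by
  have := continuous_X2v
  simp only [horLift_apply, X1v]
  fun_prop

theorem abs_apply_zero_le_norm_horProj (x : G) : |x 0| ≤ ‖horProj x‖ := by
  simpa [horProj_apply] using PiLp.norm_apply_le (horProj x) 0

theorem abs_apply_one_le_norm_horProj (x : G) : |x 1| ≤ ‖horProj x‖ := by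
  simpa [horProj_apply] using PiLp.norm_apply_le (horProj x) 1

theorem norm_X2v_sub_le {x y : G} {r : ℝ} (h : ‖horProj (y - x)‖ ≤ r) :
    ‖X2v y - X2v x‖ ≤ r * (1 + 2 * ‖x‖ + r) := by
  have hr : 0 ≤ r := (norm_nonneg _).trans h
  have hx := norm_nonneg x
  have hx₀ : |x 0| ≤ ‖x‖ := norm_le_pi_norm x 0
  have hx₁ : |x 1| ≤ ‖x‖ := norm_le_pi_norm x 1
  have hy₀ : |y 0 - x 0| ≤ r := (abs_apply_zero_le_norm_horProj (y - x)).trans h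
  have hy₁ : |y 1 - x 1| ≤ r := (abs_apply_one_le_norm_horProj (y - x)).trans h
  have hsq : |y 0 ^ 2 / 2 - x 0 ^ 2 / 2| ≤ r * (‖x‖ + r) := calc
    |y 0 ^ 2 / 2 - x 0 ^ 2 / 2| = |y 0 - x 0| * |x 0 + (y 0 - x 0) / 2| := by
      rw [← abs_mul]; ring_nf
    _ ≤ |y 0 - x 0| * (|x 0| + |y 0 - x 0|) := by
      gcongr
      refine (abs_add_le _ _).trans (add_le_add_right ?_ _)
      rw [abs_div, abs_two]
      exact half_le_self (abs_nonneg _)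
    _ ≤ r * (‖x‖ + r) := by gcongr
  have hmul : |y 0 * y 1 - x 0 * x 1| ≤ r * (2 * ‖x‖ + r) := calc
    |y 0 * y 1 - x 0 * x 1|
        = |x 0 * (y 1 - x 1) + (y 0 - x 0) * x 1 + (y 0 - x 0) * (y 1 - x 1)| := by ring_nf
    _ ≤ |x 0| * |y 1 - x 1| + |y 0 - x 0| * |x 1| + |y 0 - x 0| * |y 1 - x 1| := by
      simp only [← abs_mul]
      exact abs_add_three _ _ _
    _ ≤ ‖x‖ * r + r * ‖x‖ + r * r := by gcongr
    _ = r * (2 * ‖x‖ + r) := by ring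
  refine (pi_norm_le_iff_of_nonneg (by positivity)).2 fun i => ?_
  fin_cases i
  · simpa [X2v] using by positivity
  · simpa [X2v] using by positivity
  · rw [abs_sub_comm] at hy₀
    simpa [X2v, neg_add_eq_sub] using by nlinarith
  · simpa [X2v] using by nlinarith
  · simpa [X2v] using by nlinarith

theorem norm_horLift_sub_le {x y : G} {r : ℝ} (h : ‖horProj (y - x)‖ ≤ r)
    (v : EuclideanSpace ℝ (Fin 2)) :
    ‖horLift y v - horLift x v‖ ≤ r * (1 + 2 * ‖x‖ + r) * ‖v‖ := by
  have hdiff : horLift y v - horLift x v = v 1 • (X2v y - X2v x) := by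
    simp only [horLift_apply, X1v]
    module
  rw [hdiff, norm_smul, mul_comm]
  exact mul_le_mul (norm_X2v_sub_le h) (PiLp.norm_apply_le v 1) (norm_nonneg _)
    ((norm_nonneg _).trans (norm_X2v_sub_le h))

end HorizontalBundle

section SubunitCurves

theorem isSubunit_iff_horLift {T : ℝ} {γ : ℝ → G} :
    IsSubunit T γ ↔ (∃ C : ℝ≥0, LipschitzOnWith C γ (Icc 0 T)) ∧
      ∃ v : ℝ → EuclideanSpace ℝ (Fin 2), ∀ᵐ t ∂volume.restrict (Icc 0 T),
        HasDerivWithinAt γ (horLift (γ t) (v t)) (Icc 0 T) t ∧ ‖v t‖ ≤ 1 := by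
  refine and_congr_right fun _ => ⟨fun ⟨h, hh⟩ => ⟨fun t => !₂[(h t).1, (h t).2], ?_⟩,
    fun ⟨v, hv⟩ => ⟨fun t => (v t 0, v t 1), ?_⟩⟩
  · simpa [horLift_apply, EuclideanSpace.norm_eq] using hh
  · simpa [horLift_apply, EuclideanSpace.norm_eq] using hv

namespace IsSubunit

variable {S T : ℝ} {γ : ℝ → G}

theorem mono (hγ : IsSubunit T γ) (hST : S ≤ T) : IsSubunit S γ := by
  obtain ⟨⟨C, hC⟩, h, hh⟩ := hγ
  have hsub : Icc 0 S ⊆ Icc 0 T := Icc_subset_Icc_right hST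
  refine ⟨⟨C, hC.mono hsub⟩, h, ?_⟩
  filter_upwards [ae_restrict_of_ae_restrict_of_subset hsub hh] with t ht
  exact ⟨ht.1.mono hsub, ht.2⟩

theorem norm_horProj_sub_le (hT : 0 ≤ T) (hγ : IsSubunit T γ) :
    ‖horProj (γ T - γ 0)‖ ≤ T := by
  obtain ⟨⟨C, hC⟩, v, hv⟩ := isSubunit_iff_horLift.1 hγ
  have hbound : ‖horProj (γ T) - horProj (γ 0)‖ ≤ 1 * (T - 0) := by
    refine norm_sub_le_of_lipschitzOnWith_of_ae_norm_deriv_le (f := horProj ∘ γ) (f' := v) hT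
      (horProj.lipschitz.comp_lipschitzOnWith hC) ?_
    filter_upwards [hv] with t ⟨hd, hle⟩
    refine ⟨?_, hle⟩
    simpa only [horProj_horLift] using horProj.hasFDerivAt.comp_hasDerivWithinAt t hd
  simpa using hbound

-- The derivative of `γ t - horLift (γ 0) (horProj (γ t))` is the difference of the lifts at `γ t`
-- and `γ 0` of the same vector, hence of order `T`.
theorem norm_sub_sub_horLift_le (hT : 0 ≤ T) (hγ : IsSubunit T γ) :
    ‖γ T - γ 0 - horLift (γ 0) (horProj (γ T - γ 0))‖ ≤ T * (1 + 2 * ‖γ 0‖ + T) * T := by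
  obtain ⟨⟨C, hC⟩, v, hv⟩ := isSubunit_iff_horLift.1 hγ
  let vert : G →L[ℝ] G := .id ℝ G - horLift (γ 0) ∘L horProj
  have hbound : ‖vert (γ T) - vert (γ 0)‖ ≤ T * (1 + 2 * ‖γ 0‖ + T) * (T - 0) := by
    refine norm_sub_le_of_lipschitzOnWith_of_ae_norm_deriv_le (f := vert ∘ γ)
      (f' := fun t => horLift (γ t) (v t) - horLift (γ 0) (v t)) hT
      (vert.lipschitz.comp_lipschitzOnWith hC) ?_
    filter_upwards [hv, ae_restrict_mem measurableSet_Icc] with t ⟨hd, hle⟩ ht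
    refine ⟨?_, ?_⟩
    · simpa [vert, horProj_horLift] using vert.hasFDerivAt.comp_hasDerivWithinAt t hd
    · have hnear : ‖horProj (γ t - γ 0)‖ ≤ T :=
        ((hγ.mono ht.2).norm_horProj_sub_le ht.1).trans ht.2
      exact (norm_horLift_sub_le hnear (v t)).trans (mul_le_of_le_one_right (by positivity) hle)
  rw [← map_sub, sub_zero] at hbound
  exact hbound

end IsSubunit

end SubunitCurves

section Connectivity

/-- The points `x` and `y` are joined by a continuously differentiable horizontal curve, with
canonical coordinates `v`, that rests at `x` up to time `0` and at `y` from time `1` on. Thanks to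
the resting phases, such curves can be concatenated without losing differentiability. -/
def HorJoined (x y : G) : Prop :=
  ∃ (γ : ℝ → G) (v : ℝ → EuclideanSpace ℝ (Fin 2)), Continuous v ∧
    (∀ t, HasDerivAt γ (horLift (γ t) (v t)) t) ∧
    (∀ t ≤ 0, γ t = x ∧ v t = 0) ∧ ∀ t ≥ 1, γ t = y ∧ v t = 0

theorem hasDerivAt_gmul_gexp_smul (x : G) (u : ℝ × ℝ) (t : ℝ) :
    HasDerivAt (fun t : ℝ => gmul x (gexp (t • u)))
      (horLift (gmul x (gexp (t • u))) !₂[u.1, u.2]) t := by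
  have hcubic (a b c d : ℝ) : HasDerivAt (fun t : ℝ => a + b * t + c * t ^ 2 + d * t ^ 3)
      (b + 2 * c * t + 3 * d * t ^ 2) t := by
    convert! (((hasDerivAt_id t).const_mul b).const_add a).add
      ((hasDerivAt_pow 2 t).const_mul c) |>.add ((hasDerivAt_pow 3 t).const_mul d) using 1
    ring
  refine hasDerivAt_pi.2 fun i => ?_
  fin_cases i
  · convert! hcubic (x 0) u.1 0 0 using 1
    · ext t; simp [gmul, gexp]; ring
    · simp [horLift_apply, X1v, X2v]
  · convert! hcubic (x 1) u.2 0 0 using 1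
    · ext t; simp [gmul, gexp]; ring
    · simp [horLift_apply, X1v, X2v]
  · convert! hcubic (x 2) (-(x 0 * u.2)) (-(u.1 * u.2) / 2) 0 using 1
    · ext t; simp [gmul, gexp]; ring
    · simp [horLift_apply, X1v, X2v, gmul, gexp]; ring
  · convert! hcubic (x 3) (x 0 ^ 2 * u.2 / 2) (x 0 * u.1 * u.2 / 2) (u.1 ^ 2 * u.2 / 6) using 1
    · ext t; simp [gmul, gexp]; ring
    · simp [horLift_apply, X1v, X2v, gmul, gexp]; ring
  · convert! hcubic (x 4) (x 0 * x 1 * u.2) ((x 0 * u.2 ^ 2 + x 1 * u.1 * u.2) / 2)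
      (u.1 * u.2 ^ 2 / 3) using 1
    · ext t; simp [gmul, gexp]; ring
    · simp [horLift_apply, X1v, X2v, gmul, gexp]; ring

theorem deriv_smoothTransition_of_nonpos {t : ℝ} (ht : t ≤ 0) :
    deriv Real.smoothTransition t = 0 :=
  IsLocalMin.deriv_eq_zero <| Eventually.of_forall fun r => by
    rw [Real.smoothTransition.zero_of_nonpos ht]
    exact Real.smoothTransition.nonneg r

theorem deriv_smoothTransition_of_one_le {t : ℝ} (ht : 1 ≤ t) :
    deriv Real.smoothTransition t = 0 :=
  IsLocalMax.deriv_eq_zero <| Eventually.of_forall fun r => by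
    rw [Real.smoothTransition.one_of_one_le ht]
    exact Real.smoothTransition.le_one r

theorem horJoined_gmul_gexp (x : G) (u : ℝ × ℝ) : HorJoined x (gmul x (gexp u)) := by
  have hφ : ContDiff ℝ 1 Real.smoothTransition := Real.smoothTransition.contDiff
  refine ⟨fun t => gmul x (gexp (Real.smoothTransition t • u)),
    fun t => deriv Real.smoothTransition t • !₂[u.1, u.2],
    (hφ.continuous_deriv le_rfl).smul continuous_const, fun t => ?_, fun t ht => ⟨?_, ?_⟩,
    fun t ht => ⟨?_, ?_⟩⟩
  · rw [map_smul]
    exact (hasDerivAt_gmul_gexp_smul x u _).scomp t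
      (hφ.differentiable one_ne_zero t).hasDerivAt
  · ext i
    fin_cases i <;> simp [gmul, gexp, Real.smoothTransition.zero_of_nonpos ht]
  · simp only [deriv_smoothTransition_of_nonpos ht, zero_smul]
  · simp only [Real.smoothTransition.one_of_one_le ht, one_smul]
  · simp only [deriv_smoothTransition_of_one_le ht, zero_smul]

namespace HorJoined

-- At each time one of the two curves rests at `y`, so the concatenation is their sum minus `y`.
theorem trans {x y z : G} (hxy : HorJoined x y) (hyz : HorJoined y z) : HorJoined x z := by
  obtain ⟨γ, v, hv, hγ, hγ₀, hγ₁⟩ := hxy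
  obtain ⟨η, w, hw, hη, hη₀, hη₁⟩ := hyz
  have hfirst (t : ℝ) : HasDerivAt (fun t : ℝ => 2 * t) 2 t := by
    simpa using (hasDerivAt_id t).const_mul 2
  refine ⟨fun t => γ (2 * t) + η (2 * t - 1) - y, fun t => (2 : ℝ) • (v (2 * t) + w (2 * t - 1)),
    by fun_prop, fun t => ?_, fun t ht => ?_, fun t ht => ?_⟩
  · have hsum : HasDerivAt (fun t => γ (2 * t) + η (2 * t - 1) - y)
        ((2 : ℝ) • (horLift (γ (2 * t)) (v (2 * t)) + horLift (η (2 * t - 1)) (w (2 * t - 1))))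
        t := by
      rw [smul_add]
      exact (((hγ _).scomp t (hfirst t)).add
        ((hη _).scomp t ((hfirst t).sub_const 1))).sub_const y
    convert! hsum using 1
    rcases le_total (2 * t) 1 with h | h
    · simp [hη₀ (2 * t - 1) (by linarith)]
    · simp [hγ₁ (2 * t) h]
  · simp [hγ₀ (2 * t) (by linarith), hη₀ (2 * t - 1) (by linarith)]
  · simp [hγ₁ (2 * t) (by linarith), hη₁ (2 * t - 1) (by linarith)]

theorem exists_isSubunit {x y : G} (h : HorJoined x y) :
    ∃ T : ℝ, 0 ≤ T ∧ ∃ γ : ℝ → G, γ 0 = x ∧ γ T = y ∧ IsSubunit T γ := by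
  obtain ⟨γ, v, hv, hγ, hγ₀, hγ₁⟩ := h
  obtain ⟨M, hM⟩ := isCompact_Icc.exists_bound_of_continuousOn (s := Icc (0 : ℝ) 1) hv.continuousOn
  have hM₀ : 0 ≤ M := (norm_nonneg _).trans (hM 0 (by simp))
  let T := M + 1
  have hT : 0 < T := by positivity
  have hscale (t : ℝ) : HasDerivAt (fun t => γ (T⁻¹ * t))
      (horLift (γ (T⁻¹ * t)) (T⁻¹ • v (T⁻¹ * t))) t := by
    rw [map_smul]
    exact (hγ _).scomp t (by simpa using (hasDerivAt_id t).const_mul T⁻¹)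
  have hcont : Continuous γ := continuous_iff_continuousAt.2 fun t => (hγ t).continuousAt
  have hC1 : ContDiff ℝ 1 fun t => γ (T⁻¹ * t) := by
    refine contDiff_one_iff_deriv.2 ⟨fun t => (hscale t).differentiableAt, ?_⟩
    rw [funext fun t => (hscale t).deriv]
    exact continuous_horLift_apply (by fun_prop) (by fun_prop)
  refine ⟨T, hT.le, fun t => γ (T⁻¹ * t), by simp [hγ₀ 0 le_rfl],
    by simp [inv_mul_cancel₀ hT.ne', hγ₁ 1 le_rfl],
    isSubunit_iff_horLift.2 ⟨?_, fun t => T⁻¹ • v (T⁻¹ * t), ?_⟩⟩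
  · exact hC1.contDiffOn.exists_lipschitzOnWith one_ne_zero (convex_Icc _ _) isCompact_Icc
  · filter_upwards [ae_restrict_mem measurableSet_Icc] with t ht
    refine ⟨(hscale t).hasDerivWithinAt, ?_⟩
    have hmem : T⁻¹ * t ∈ Icc (0 : ℝ) 1 :=
      ⟨by have := ht.1; positivity, by rw [inv_mul_le_iff₀ hT, mul_one]; exact ht.2⟩
    rw [norm_smul, norm_inv, Real.norm_of_nonneg hT.le, inv_mul_le_iff₀ hT, mul_one]
    exact (hM _ hmem).trans (by simp [T])

end HorJoined

-- The loop runs around the rectangle `[0, w] × [x 1, x 1 + s]` of the first layer.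
theorem horJoined_add_rectangle (x : G) (w s : ℝ) :
    HorJoined x (x + ![0, 0, -(w * s), w ^ 2 * s / 2, w * (x 1 * s + s ^ 2 / 2)]) := by
  have hloop := ((((horJoined_gmul_gexp x (w - x 0, 0)).trans
    (horJoined_gmul_gexp _ (0, s))).trans (horJoined_gmul_gexp _ (-w, 0))).trans
    (horJoined_gmul_gexp _ (0, -s))).trans (horJoined_gmul_gexp _ (x 0, 0))
  convert! hloop using 1
  ext i
  fin_cases i <;> simp [gmul, gexp] <;> ring

-- The areas enclosed by the loops of each pair cancel, while their first moments add up.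
theorem horJoined_add_third_layer (x : G) (b c : ℝ) : HorJoined x (x + ![0, 0, 0, b, c]) := by
  have hloops := (((horJoined_add_rectangle x 1 b).trans
    (horJoined_add_rectangle _ (-1) b)).trans (horJoined_add_rectangle _ c 1)).trans
    (horJoined_add_rectangle _ c (-1))
  convert! hloops using 1
  ext i
  fin_cases i <;> simp [-Matrix.add_cons] <;> ring

theorem horJoined_of_horProj_eq {x y : G} (h : horProj x = horProj y) : HorJoined x y := by
  have hcorrect := (horJoined_add_rectangle x 1 (x 2 - y 2)).trans
    (horJoined_add_third_layer _ (y 3 - x 3 - (x 2 - y 2) / 2)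
      (y 4 - x 4 - (x 1 * (x 2 - y 2) + (x 2 - y 2) ^ 2 / 2)))
  convert! hcorrect using 1
  have h₀ : x 0 = y 0 := by simpa [horProj_apply] using congr($h 0)
  have h₁ : x 1 = y 1 := by simpa [horProj_apply] using congr($h 1)
  ext i
  fin_cases i <;> simp [-Matrix.add_cons, h₀, h₁]

theorem horJoined (x y : G) : HorJoined x y := by
  refine (horJoined_gmul_gexp x (y 0 - x 0, y 1 - x 1)).trans (horJoined_of_horProj_eq ?_)
  simp [horProj_apply, gmul, gexp]

end Connectivity

section CarnotCaratheodory

theorem dc_nonneg (x y : G) : 0 ≤ dc x y :=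
  Real.sInf_nonneg fun _ hT => hT.1

theorem norm_horProj_sub_le_dc (x y : G) : ‖horProj (y - x)‖ ≤ dc x y := by
  refine le_csInf (horJoined x y).exists_isSubunit ?_
  rintro T ⟨hT, γ, rfl, rfl, hγ⟩
  exact hγ.norm_horProj_sub_le hT

theorem norm_sub_sub_horLift_le_dc (x y : G) :
    ‖y - x - horLift x (horProj (y - x))‖ ≤ dc x y * (1 + 2 * ‖x‖ + dc x y) * dc x y := by
  have hcont : Continuous fun r : ℝ => r * (1 + 2 * ‖x‖ + r) * r := by fun_prop
  refine ge_of_tendsto (hcont.continuousWithinAt (s := Ioi (dc x y))) ?_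
  filter_upwards [self_mem_nhdsWithin] with r hr
  obtain ⟨T, ⟨hT, γ, rfl, rfl, hγ⟩, hTr⟩ :=
    exists_lt_of_csInf_lt (horJoined x y).exists_isSubunit hr
  have hr₀ : 0 ≤ r := hT.trans hTr.le
  exact (hγ.norm_sub_sub_horLift_le hT).trans (by gcongr)

variable {γ : ℝ → G} {B : Set ℝ} {t L : ℝ}

theorem isBigO_sub_sub_horLift_of_dc_le (hγ : ∀ s ∈ B, dc (γ t) (γ s) ≤ L * |s - t|) :
    (fun s => γ s - γ t - horLift (γ t) (horProj (γ s - γ t)))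
      =O[𝓝[B] t] fun s => ‖s - t‖ ^ 2 := by
  refine Asymptotics.IsBigO.of_bound (L * (1 + 2 * ‖γ t‖ + |L|) * L) ?_
  filter_upwards [self_mem_nhdsWithin, nhdsWithin_le_nhds (Metric.ball_mem_nhds t one_pos)]
    with s hs hst
  have hdc := hγ s hs
  have hdc₀ := dc_nonneg (γ t) (γ s)
  have hdcL : dc (γ t) (γ s) ≤ |L| := hdc.trans <|
    (mul_le_mul_of_nonneg_right (le_abs_self L) (abs_nonneg _)).trans <|
      mul_le_of_le_one_right (abs_nonneg L) hst.le
  calc ‖γ s - γ t - horLift (γ t) (horProj (γ s - γ t))‖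
      ≤ dc (γ t) (γ s) * (1 + 2 * ‖γ t‖ + dc (γ t) (γ s)) * dc (γ t) (γ s) :=
        norm_sub_sub_horLift_le_dc _ _
    _ ≤ L * |s - t| * (1 + 2 * ‖γ t‖ + |L|) * (L * |s - t|) := by
        have := hdc₀.trans hdc
        gcongr
    _ = L * (1 + 2 * ‖γ t‖ + |L|) * L * ‖‖s - t‖ ^ 2‖ := by
        rw [norm_pow, norm_norm, Real.norm_eq_abs]
        ring

theorem hasDerivWithinAt_of_dc_le {v : EuclideanSpace ℝ (Fin 2)} (ht : t ∈ B)
    (hγ : ∀ s ∈ B, dc (γ t) (γ s) ≤ L * |s - t|)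
    (hv : HasDerivWithinAt (fun s => horProj (γ s)) v B t) :
    HasDerivWithinAt γ (horLift (γ t) v) B t := by
  have hrem : HasDerivWithinAt (fun s => γ s - γ t - horLift (γ t) (horProj (γ s - γ t))) 0 B t :=
    (isBigO_sub_sub_horLift_of_dc_le hγ).hasFDerivWithinAt ht one_lt_two |>.hasDerivWithinAt
  have hlift : HasDerivWithinAt (fun s => horLift (γ t) (horProj (γ s - γ t)))
      (horLift (γ t) v) B t := by
    simp only [map_sub horProj]
    exact (horLift (γ t)).hasFDerivAt.comp_hasDerivWithinAt t (hv.sub_const _)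
  simpa using (hrem.add hlift).add_const (γ t)

end CarnotCaratheodory

theorem statement9_general (B : Set ℝ) (L : ℝ) (γ : ℝ → G)
    (hγ : ∀ s ∈ B, ∀ t ∈ B, dc (γ s) (γ t) ≤ L * |s - t|) :
    ∃ h : ℝ → ℝ × ℝ, Measurable h ∧ ∀ᵐ t, t ∈ B →
      Real.sqrt ((h t).1 ^ 2 + (h t).2 ^ 2) ≤ L ∧
        HasDerivWithinAt γ ((h t).1 • X1v (γ t) + (h t).2 • X2v (γ t)) B t := by
  have hproj : ∀ s ∈ B, ∀ t ∈ B, ‖horProj (γ s) - horProj (γ t)‖ ≤ L * |s - t| := by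
    intro s hs t ht
    rw [norm_sub_rev, ← map_sub]
    exact (norm_horProj_sub_le_dc _ _).trans (hγ s hs t ht)
  obtain ⟨v, hv, hderiv⟩ := exists_measurable_ae_hasDerivWithinAt_of_norm_sub_le hproj
  refine ⟨fun t => (v t 0, v t 1), by fun_prop, ?_⟩
  filter_upwards [hderiv] with t hvt ht
  obtain ⟨hnorm, hd⟩ := hvt ht
  refine ⟨by simpa [EuclideanSpace.norm_eq] using hnorm, ?_⟩
  exact hasDerivWithinAt_of_dc_le ht (fun s hs => abs_sub_comm t s ▸ hγ t ht s hs) hd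

/-- If `γ : B → ℝ⁵` is `L`-Lipschitz w.r.t. the Carnot–Carathéodory
distance, then a.e. on `B` the derivative of `γ` along `B` exists and is a horizontal
combination `h₁ X₁(γ) + h₂ X₂(γ)` with measurable canonical coordinates `h` satisfying
`|h| ≤ L`. -/
theorem statement9 (B : Set ℝ) (hB : MeasurableSet B) (L : ℝ) (hL : 0 < L) (γ : ℝ → G)
    (hγ : ∀ s ∈ B, ∀ t ∈ B, dc (γ s) (γ t) ≤ L * |s - t|) :
    ∃ h : ℝ → ℝ × ℝ, Measurable h ∧
      ∀ᵐ t ∂(volume.restrict B),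
        Real.sqrt ((h t).1 ^ 2 + (h t).2 ^ 2) ≤ L ∧
        HasDerivWithinAt γ ((h t).1 • X1v (γ t) + (h t).2 • X2v (γ t)) B t := by
  simpa only [ae_restrict_iff' hB] using statement9_general B L γ hγ
end
end
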